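/- Let K and K′ be number fields contained in a fixed algebraic closure of ℚ, and let K·K′ denote their compositum. Then d_K divides d_{K·K′}, d_{K′} divides d_{K·K′} (hence lcm(d_K, d_{K′}) divides d_{K·K′}), and d_{K·K′} divides d_K^{[K′:ℚ]} · d_{K′}^{[K:ℚ]}. -/

import Mathlib

/-!
Let `K₁` and `K₂` generate `L`, and let `b` be a basis of `K₂` over the base field with trace dual
`b'`. The matrices `(σ (b i))` and `(τ (b' i))`, with `σ`, `τ` running over the embeddings of `K₂`,
are inverse to each other up to transposition. An embedding of `L` over `K₁` is determined by its
restriction to `K₂`, so every `x` in `L` is equal to `∑ i, Tr_{L/K₁} (x * b i) * b' i`, even when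
`K₁` and `K₂` are not linearly disjoint and the `b i` do not form a basis of `L` over `K₁`.

If `b` is an integral basis, the `b' i` lie in the inverse different of `K₂`, and the traces are
integral when `x` lies in the inverse different of `L / K₁`. Hence the different of `L / K₁` divides
the different of `K₂`. Taking norms, the tower formula for discriminants gives
`d_L ∣ d_{K₁} ^ [L : K₁] * d_{K₂} ^ [L : K₂]`.
-/

open Algebra IntermediateField Module NumberField Submodule nonZeroDivisors

section Field

variable {K L : Type*} [Field K] [Field L] [Algebra K L]

theorem sum_algHom_mul_algHom_traceDual {ι : Type*} [Fintype ι] [DecidableEq ι]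
    [FiniteDimensional K L] [Algebra.IsSeparable K L] (b : Basis ι K L)
    {Ω : Type*} [Field Ω] [IsAlgClosed Ω] [Algebra K Ω] [DecidableEq (L →ₐ[K] Ω)]
    (σ τ : L →ₐ[K] Ω) :
    ∑ i, σ (b i) * τ (b.traceDual i) = if σ = τ then 1 else 0 := by
  have hdual : embeddingsMatrix K Ω b.traceDual * (embeddingsMatrix K Ω b).transpose = 1 := by
    ext i j
    simp only [Matrix.mul_apply, Matrix.transpose_apply, embeddingsMatrix_apply, ← map_mul,
      ← trace_eq_sum_embeddings, b.trace_traceDual_mul, Matrix.one_apply, eq_comm,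
      MonoidWithZeroHom.map_ite_one_zero]
  have hcard : Fintype.card ι = Fintype.card (L →ₐ[K] Ω) := by
    rw [AlgHom.card, finrank_eq_card_basis b]
  have horth := (Matrix.mul_eq_one_comm_of_card_eq _ _ _ hcard).mp hdual
  simpa only [Matrix.mul_apply, Matrix.transpose_apply, embeddingsMatrix_apply,
    Matrix.one_apply] using congr_fun₂ horth σ τ

variable {F₁ F₂ : IntermediateField K L}

theorem algHom_ext_of_sup_eq_top (h : F₁ ⊔ F₂ = ⊤) {Ω : Type*} [Semiring Ω] [Algebra K Ω]
    [Algebra F₁ Ω] [IsScalarTower K F₁ Ω] {σ τ : L →ₐ[F₁] Ω}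
    (hστ : (σ.restrictScalars K).comp F₂.val = (τ.restrictScalars K).comp F₂.val) : σ = τ := by
  let S : IntermediateField K L :=
    ((σ : L →+* Ω).eqLocusField τ).toIntermediateField fun a =>
      ((σ.restrictScalars K).commutes a).trans ((τ.restrictScalars K).commutes a).symm
  have hF₁ : F₁ ≤ S := fun y hy => (σ.commutes ⟨y, hy⟩).trans (τ.commutes ⟨y, hy⟩).symm
  have hF₂ : F₂ ≤ S := fun y hy => by exact DFunLike.congr_fun hστ ⟨y, hy⟩
  exact AlgHom.ext fun y => sup_le hF₁ hF₂ (h ▸ IntermediateField.mem_top)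

theorem sum_trace_mul_smul_traceDual_of_sup_eq_top (h : F₁ ⊔ F₂ = ⊤) [FiniteDimensional K F₂]
    [Algebra.IsSeparable K F₂] [FiniteDimensional F₁ L] [Algebra.IsSeparable F₁ L]
    {ι : Type*} [Fintype ι] [DecidableEq ι] (b : Basis ι K F₂) (x : L) :
    ∑ i, trace F₁ L (x * b i) • (b.traceDual i : L) = x := by
  classical
  let φ : L →ₐ[F₁] AlgebraicClosure L := (ofId L (AlgebraicClosure L)).restrictScalars F₁
  let res (σ : L →ₐ[F₁] AlgebraicClosure L) : F₂ →ₐ[K] AlgebraicClosure L :=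
    (σ.restrictScalars K).comp F₂.val
  have hres (σ : L →ₐ[F₁] AlgebraicClosure L) : res σ = res φ ↔ σ = φ :=
    ⟨algHom_ext_of_sup_eq_top h, congr_arg res⟩
  apply φ.injective
  calc φ (∑ i, trace F₁ L (x * b i) • (b.traceDual i : L))
      = ∑ i, (∑ σ : L →ₐ[F₁] AlgebraicClosure L, σ (x * b i)) * φ (b.traceDual i) := by
        simp only [map_sum, Algebra.smul_def, map_mul, AlgHom.commutes,
          trace_eq_sum_embeddings (AlgebraicClosure L)]
    _ = ∑ σ : L →ₐ[F₁] AlgebraicClosure L, σ x * ∑ i, res σ (b i) * res φ (b.traceDual i) := by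
        simp_rw [Finset.sum_mul, Finset.mul_sum, map_mul, mul_assoc]
        exact Finset.sum_comm
    _ = φ x := by
        simp only [sum_algHom_mul_algHom_traceDual, hres, mul_ite, mul_one, mul_zero,
          Finset.sum_ite_eq', Finset.mem_univ, if_true]

theorem finrank_le_finrank_of_sup_eq_top (h : F₁ ⊔ F₂ = ⊤) [FiniteDimensional K F₁] :
    finrank F₁ L ≤ finrank K F₂ := by
  refine Nat.le_of_mul_le_mul_left ?_ (finrank_pos (R := K) (M := F₁))
  calc finrank K F₁ * finrank F₁ L = finrank K ↥(F₁ ⊔ F₂) := by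
        rw [finrank_mul_finrank, h, finrank_top']
    _ ≤ finrank K F₁ * finrank K F₂ := finrank_sup_le F₁ F₂

theorem restrict_sup_restrict (F F' : IntermediateField K L) :
    restrict (le_sup_left : F ≤ F ⊔ F') ⊔ restrict (le_sup_right : F' ≤ F ⊔ F') = ⊤ := by
  rw [← lift_inj, lift_sup, lift_restrict, lift_restrict, lift_top]

theorem finrank_restrict {F E : IntermediateField K L} (h : F ≤ E) :
    finrank K (restrict h) = finrank K F :=
  (restrictAlgEquiv h).toLinearEquiv.finrank_eq.symm

end Field

section Dedekind

variable (A K : Type*) {B : Type*} (L : Type*) [CommRing A] [IsDomain A] [CommRing B]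
  [Field K] [Field L] [Algebra A B] [Algebra K L] [FiniteDimensional K L]
  [Algebra.IsSeparable K L] [Algebra A K] [IsFractionRing A K] [Algebra B L]
  [Algebra A L] [IsScalarTower A K L] [IsScalarTower A B L] [IsIntegralClosure B A L]

theorem exists_basis_traceDual_mem_traceDual [Module.Free A B] [Module.Finite A B] :
    ∃ b : Basis (Free.ChooseBasisIndex A B) K L,
      (∀ i, b i ∈ (1 : Submodule B L)) ∧
        ∀ i, b.traceDual i ∈ traceDual A K (1 : Submodule B L) := by
  have : IsLocalization (Algebra.algebraMapSubmonoid B A⁰) L :=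
    IsIntegralClosure.isLocalization A K L B
  let b := (Free.chooseBasis A B).localizationLocalization K A⁰ L
  have hspan : span A (Set.range b) = (1 : Submodule B L).restrictScalars A := by
    rw [Basis.localizationLocalization_span K A⁰ L]
    ext
    simp
  refine ⟨b, fun i => ?_, fun i => ?_⟩
  · rw [← restrictScalars_mem A, ← hspan]
    exact subset_span ⟨i, rfl⟩
  · rw [← restrictScalars_mem A, traceDual_span_of_basis A 1 b hspan.symm]
    exact subset_span ⟨i, rfl⟩

variable [IsIntegrallyClosed A] [IsDedekindDomain B] [IsFractionRing B L] [IsTorsionFree A B]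

theorem mem_differentIdeal_iff {y : B} :
    y ∈ differentIdeal A B ↔
      ∀ x ∈ traceDual A K (1 : Submodule B L), algebraMap B L y * x ∈ (1 : Submodule B L) := by
  rw [← mem_div_iff_forall_mul_mem, ← coeSubmodule_differentIdeal A K]
  exact ((IsFractionRing.injective B L).mem_set_image (s := (differentIdeal A B : Set B))).symm

end Dedekind

section Different

variable (A : Type*) {K : Type*} (B : Type*) {L : Type*} (R₁ R₂ : Type*)
  [CommRing A] [IsDomain A] [IsIntegrallyClosed A] [Field K] [Algebra A K] [IsFractionRing A K]
  [CommRing B] [IsDedekindDomain B] [Field L] [Algebra B L] [IsFractionRing B L]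
  [Algebra K L] [Algebra A L] [IsScalarTower A K L] {F₁ F₂ : IntermediateField K L}
  [CommRing R₁] [IsDomain R₁] [IsIntegrallyClosed R₁] [Algebra R₁ F₁] [IsFractionRing R₁ F₁]
  [CommRing R₂] [IsDedekindDomain R₂] [Algebra R₂ F₂] [IsFractionRing R₂ F₂]
  [Algebra A R₂] [IsTorsionFree A R₂] [IsScalarTower A R₂ F₂] [IsIntegralClosure R₂ A F₂]
  [Module.Free A R₂] [Module.Finite A R₂]
  [Algebra R₁ L] [IsScalarTower R₁ F₁ L] [Algebra R₁ B] [IsTorsionFree R₁ B]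
  [IsScalarTower R₁ B L] [IsIntegralClosure B R₁ L]
  [Algebra R₂ L] [IsScalarTower R₂ F₂ L] [Algebra R₂ B] [IsScalarTower R₂ B L]
  [FiniteDimensional K F₂] [Algebra.IsSeparable K F₂]
  [FiniteDimensional F₁ L] [Algebra.IsSeparable F₁ L]

theorem differentIdeal_dvd_map_differentIdeal_of_sup_eq_top (h : F₁ ⊔ F₂ = ⊤) :
    differentIdeal R₁ B ∣ (differentIdeal A R₂).map (algebraMap R₂ B) := by
  classical
  obtain ⟨b, hb, hdual⟩ := exists_basis_traceDual_mem_traceDual A K (B := R₂) F₂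
  have hmem {z : F₂} (hz : z ∈ (1 : Submodule R₂ F₂)) : (z : L) ∈ (1 : Submodule B L) := by
    obtain ⟨r, rfl⟩ := mem_one.mp hz
    exact mem_one.mpr ⟨algebraMap R₂ B r, by
      rw [← IsScalarTower.algebraMap_apply, IsScalarTower.algebraMap_apply R₂ F₂ L]; rfl⟩
  rw [Ideal.dvd_iff_le, Ideal.map_le_iff_le_comap]
  intro y hy
  rw [Ideal.mem_comap, mem_differentIdeal_iff R₁ F₁ L]
  intro x hx
  rw [← sum_trace_mul_smul_traceDual_of_sup_eq_top h b x, Finset.mul_sum]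
  refine sum_mem fun i _ => ?_
  obtain ⟨c, hc⟩ : trace F₁ L (x * b i) ∈ (algebraMap R₁ F₁).range :=
    mem_traceDual.mp hx _ (hmem (hb i))
  have hy_dual : algebraMap B L (algebraMap R₂ B y) * b.traceDual i ∈ (1 : Submodule B L) := by
    rw [← IsScalarTower.algebraMap_apply, IsScalarTower.algebraMap_apply R₂ F₂ L]
    exact hmem ((mem_differentIdeal_iff A K F₂).mp hy _ (hdual i))
  rw [← hc, algebraMap_smul, mul_smul_comm, ← algebraMap_smul B c]
  exact smul_mem _ _ hy_dual

end Different

section NumberField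

-- The algebra structure is left to unification: that of an intermediate field over `ℚ` is not
-- definitionally the canonical `DivisionRing.toRatAlgebra`.
theorem natAbs_discr_dvd_of_sup_eq_top {L : Type*} [Field L] {_ : Algebra ℚ L} [NumberField L]
    {K₁ K₂ : IntermediateField ℚ L} [NumberField K₁] [NumberField K₂] (h : K₁ ⊔ K₂ = ⊤) :
    (discr L).natAbs ∣
      (discr K₁).natAbs ^ finrank ℚ K₂ * (discr K₂).natAbs ^ finrank ℚ K₁ := by
  obtain rfl : ‹Algebra ℚ L› = DivisionRing.toRatAlgebra := Subsingleton.elim _ _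
  let _ : Algebra (FractionRing (𝓞 K₂)) (FractionRing (𝓞 L)) := FractionRing.liftAlgebra _ _
  have hdiff : Ideal.absNorm (differentIdeal (𝓞 K₁) (𝓞 L)) ∣
      (discr K₂).natAbs ^ finrank K₂ L := by
    rw [← absNorm_differentIdeal K₂ (𝓞 K₂), IsFractionRing.finrank_eq (𝓞 K₂) K₂ (𝓞 L) L,
      ← Ideal.absNorm_algebraMap]
    exact Ideal.absNorm_dvd_absNorm_of_le <| Ideal.le_of_dvd <|
      differentIdeal_dvd_map_differentIdeal_of_sup_eq_top ℤ (𝓞 L) (𝓞 K₁) (𝓞 K₂) h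
  calc (discr L).natAbs
      = (discr K₁).natAbs ^ finrank K₁ L * Ideal.absNorm (differentIdeal (𝓞 K₁) (𝓞 L)) := by
        rw [natAbs_discr_eq_absNorm_differentIdeal_mul_natAbs_discr_pow K₁ (𝓞 K₁) L (𝓞 L),
          mul_comm]
    _ ∣ (discr K₁).natAbs ^ finrank K₁ L * (discr K₂).natAbs ^ finrank K₂ L :=
      mul_dvd_mul_left _ hdiff
    _ ∣ (discr K₁).natAbs ^ finrank ℚ K₂ * (discr K₂).natAbs ^ finrank ℚ K₁ :=
      mul_dvd_mul (pow_dvd_pow _ (finrank_le_finrank_of_sup_eq_top h))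
        (pow_dvd_pow _ (finrank_le_finrank_of_sup_eq_top (sup_comm K₁ K₂ ▸ h)))

variable {E : Type*} [Field E] [Algebra ℚ E]

theorem natAbs_discr_dvd_of_le {K L : IntermediateField ℚ E} [NumberField K] [NumberField L]
    (h : K ≤ L) : (discr K).natAbs ∣ (discr L).natAbs := by
  let _ : Algebra K L := (inclusion h).toAlgebra
  exact Int.natAbs_dvd_natAbs.mpr (discr_dvd_discr K L)

theorem numberField_restrict {K L : IntermediateField ℚ E} [NumberField K] (h : K ≤ L) :
    NumberField (restrict h) :=
  .of_ringEquiv K _ (restrictAlgEquiv h)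

theorem discr_restrict {K L : IntermediateField ℚ E} [NumberField K] (h : K ≤ L)
    [NumberField (restrict h)] : discr (restrict h) = discr K :=
  (discr_eq_discr_of_ringEquiv K (restrictAlgEquiv h : K ≃+* restrict h)).symm

theorem natAbs_discr_sup_dvd (K K' : IntermediateField ℚ E)
    [NumberField K] [NumberField K'] [NumberField ↥(K ⊔ K')] :
    (discr ↥(K ⊔ K')).natAbs ∣
      (discr K).natAbs ^ finrank ℚ K' * (discr K').natAbs ^ finrank ℚ K := by
  have := numberField_restrict (le_sup_left : K ≤ K ⊔ K')
  have := numberField_restrict (le_sup_right : K' ≤ K ⊔ K')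
  have hdvd := natAbs_discr_dvd_of_sup_eq_top (restrict_sup_restrict K K')
  rwa [discr_restrict, discr_restrict, finrank_restrict, finrank_restrict] at hdvd

theorem discr_compositum_dvd_general (K K' : IntermediateField ℚ E)
    [NumberField K] [NumberField K'] [NumberField ↥(K ⊔ K')] :
    (discr K).natAbs ∣ (discr ↥(K ⊔ K')).natAbs ∧
    (discr K').natAbs ∣ (discr ↥(K ⊔ K')).natAbs ∧
    Nat.lcm (discr K).natAbs (discr K').natAbs ∣ (discr ↥(K ⊔ K')).natAbs ∧
    (discr ↥(K ⊔ K')).natAbs ∣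
      (discr K).natAbs ^ finrank ℚ K' * (discr K').natAbs ^ finrank ℚ K := by
  have hK : (discr K).natAbs ∣ (discr ↥(K ⊔ K')).natAbs := natAbs_discr_dvd_of_le le_sup_left
  have hK' : (discr K').natAbs ∣ (discr ↥(K ⊔ K')).natAbs := natAbs_discr_dvd_of_le le_sup_right
  exact ⟨hK, hK', Nat.lcm_dvd hK hK', natAbs_discr_sup_dvd K K'⟩

end NumberField

/-- For number fields `K`, `K'` inside a fixed algebraic closure of `ℚ`, with compositum
`K ⊔ K'`: `d_K ∣ d_{K·K'}`, `d_{K'} ∣ d_{K·K'}` (hence `lcm(d_K, d_{K'}) ∣ d_{K·K'}`), and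
`d_{K·K'} ∣ d_K ^ [K':ℚ] * d_{K'} ^ [K:ℚ]`. -/
theorem discr_compositum_dvd (K K' : IntermediateField ℚ (AlgebraicClosure ℚ))
    [NumberField ↥K] [NumberField ↥K'] [NumberField ↥(K ⊔ K')] :
    (NumberField.discr ↥K).natAbs ∣ (NumberField.discr ↥(K ⊔ K')).natAbs ∧
    (NumberField.discr ↥K').natAbs ∣ (NumberField.discr ↥(K ⊔ K')).natAbs ∧
    Nat.lcm (NumberField.discr ↥K).natAbs (NumberField.discr ↥K').natAbs ∣
      (NumberField.discr ↥(K ⊔ K')).natAbs ∧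
    (NumberField.discr ↥(K ⊔ K')).natAbs ∣
      (NumberField.discr ↥K).natAbs ^ (Module.finrank ℚ ↥K') *
        (NumberField.discr ↥K').natAbs ^ (Module.finrank ℚ ↥K) :=
  discr_compositum_dvd_general K K'
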